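/- The determinant of an alternating matrix of even size 2n over a commutative ring equals the square of its Pfaffian. -/

import Mathlib

open Finset in
/-- The set of permutations of `Fin (2*n)` giving normalized perfect matchings. -/
noncomputable def pfPerms (n : ℕ) : Finset (Equiv.Perm (Fin (2*n))) :=
  Finset.univ.filter (fun σ =>
    (∀ i : Fin n, σ ⟨2*i, by omega⟩ < σ ⟨2*i+1, by omega⟩) ∧
    (∀ i j : Fin n, i < j → σ ⟨2*(i:ℕ), by omega⟩ < σ ⟨2*(j:ℕ), by omega⟩))

/-- The Pfaffian of a `2n × 2n` matrix, as the signed sum over perfect matchings. -/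
noncomputable def pfaffian {R : Type*} [CommRing R] {n : ℕ}
    (A : Matrix (Fin (2*n)) (Fin (2*n)) R) : R :=
  ∑ σ ∈ pfPerms n, (Equiv.Perm.sign σ : ℤ) •
    ∏ i : Fin n, A (σ ⟨2*i, by omega⟩) (σ ⟨2*i+1, by omega⟩)

variable {R : Type*} [CommRing R]

/-!
Let `F A` be the signed sum of `∏ i, A (σ (2 * i)) (σ (2 * i + 1))` over *all* permutations `σ`.
Flipping the pairs and permuting them does not change the summands when `Aᵀ = -A`, and every
permutation can be normalized in a unique way by such moves, so `F A = 2 ^ n * n! * Pf A`. Expanding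
the product gives `F (B * A * Bᵀ) = det B * F A` over any commutative ring, so in the absence of
torsion `Pf (B * A * Bᵀ) = det B * Pf A`.

Over a field, an alternating matrix is a sum of `n` wedges `u ∧ v`, which amounts to
`A = B * J * Bᵀ` for the standard alternating matrix `J`. As `det J = Pf J = 1`, in characteristic
zero `det A = (det B) ^ 2 = (Pf A) ^ 2`. Every alternating matrix has the form `M - Mᵀ`, hence is
a specialization of `X - Xᵀ`, where `X` is the generic matrix over `ℤ`. The entries of `X` lie in
a domain of characteristic zero.
-/

open Equiv Equiv.Perm Matrix
open scoped Kronecker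

lemma sum_eq_card_nsmul_sum_of_existsUnique {G T M : Type*} [Group G] [Fintype G] [Fintype T]
    [AddCommMonoid M] {S : Finset G} {p : T → G} (hS : ∀ g, ∃! t, g * p t ∈ S) {f : G → M}
    (hf : ∀ g t, f (g * p t) = f g) : ∑ g, f g = Fintype.card T • ∑ g ∈ S, f g := by
  classical
  calc ∑ g, f g
    _ = ∑ g, ∑ t, if g * p t ∈ S then f (g * p t) else 0 := by
      refine Finset.sum_congr rfl fun g _ => ?_
      obtain ⟨t, ht, ht_unique⟩ := hS g
      rw [Fintype.sum_eq_single t fun s hs => if_neg (mt (ht_unique s) hs), if_pos ht, hf]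
    _ = ∑ t : T, ∑ g, if g ∈ S then f g else 0 := by
      rw [Finset.sum_comm]
      exact Finset.sum_congr rfl fun t _ =>
        Equiv.sum_comp (Equiv.mulRight (p t)) fun g => if g ∈ S then f g else 0
    _ = Fintype.card T • ∑ g ∈ S, f g := by simp

lemma sum_mul_det_submatrix {ι : Type*} [Fintype ι] [DecidableEq ι] (B : Matrix ι ι R)
    (g : (ι → ι) → R) :
    ∑ f : ι → ι, g f * (B.submatrix id f).det = B.det * ∑ σ : Perm ι, sign σ • g σ := by
  have hzero (f : ι → ι) (hf : f ∉ Set.range ((⇑) : Perm ι → ι → ι)) :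
      g f * (B.submatrix id f).det = 0 := by
    have hf_inj : ¬ Function.Injective f := fun h =>
      hf ⟨.ofBijective f (Finite.injective_iff_bijective.1 h), rfl⟩
    obtain ⟨i, j, hij, hne⟩ := Function.not_injective_iff.1 hf_inj
    rw [det_zero_of_column_eq hne fun k => by simp [hij], mul_zero]
  rw [Finset.mul_sum]
  refine (Fintype.sum_of_injective _ coe_fn_injective _ _ hzero fun σ => ?_).symm
  rw [det_permute', Units.smul_def, zsmul_eq_mul]
  ring

section BlockPerm

variable {κ β : Type*}

/-- The action on `κ × β` of the element `h` of the wreath product of `Perm β` by `Perm κ`: it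
applies `h.1 k` inside the `k`-th block `{k} × β`, then moves the blocks by `h.2`. For `β = Fin 2`
these are the permutations preserving the matching with edges `{(k, 0), (k, 1)}`. -/
def blockPerm (h : (κ → Perm β) × Perm κ) : Perm (κ × β) :=
  prodCongrLeft (fun _ => h.2) * prodCongrRight h.1

@[simp]
lemma blockPerm_apply (h : (κ → Perm β) × Perm κ) (x : κ × β) :
    blockPerm h x = (h.2 x.1, h.1 x.1 x.2) := rfl

lemma sign_blockPerm [Fintype κ] [DecidableEq κ] (h : (κ → Perm (Fin 2)) × Perm κ) :
    sign (blockPerm h) = ∏ k, sign (h.1 k) := by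
  simp [blockPerm, sign_prodCongrLeft, sign_prodCongrRight]

lemma exists_eq_blockPerm_of_fst_apply_eq [Finite κ] [Finite β] {σ : Perm (κ × β)}
    (hσ : ∀ k b c, (σ (k, b)).1 = (σ (k, c)).1) : ∃ h, σ = blockPerm h := by
  rcases isEmpty_or_nonempty β with hβ | ⟨⟨b₀⟩⟩
  · exact ⟨1, Subsingleton.elim _ _⟩
  have hfst (k : κ) (b : β) : (σ (k, b)).1 = (σ (k, b₀)).1 := hσ k b b₀
  have hblocks : Function.Surjective fun k => (σ (k, b₀)).1 := fun j => by
    obtain ⟨⟨k, b⟩, hkb⟩ := σ.surjective (j, b₀)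
    exact ⟨k, by simp [← hfst k b, hkb]⟩
  have hinside (k : κ) : Function.Injective fun b => (σ (k, b)).2 := fun b c hbc =>
    (Prod.ext_iff.1 (σ.injective (Prod.ext (hσ k b c) hbc))).2
  refine ⟨(fun k => .ofBijective _ (Finite.injective_iff_bijective.1 (hinside k)),
    .ofBijective _ (Finite.surjective_iff_bijective.1 hblocks)), ?_⟩
  ext ⟨k, b⟩ : 1
  exact Prod.ext (hfst k b) rfl

end BlockPerm

section Normalization

/-- A labelling `f` of `n` pairs is normalized if it is increasing on every pair and the first
entries of the pairs increase. -/
def IsNormalized {α : Type*} [LinearOrder α] {n : ℕ} (f : Fin n × Fin 2 → α) : Prop :=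
  (∀ k, f (k, 0) < f (k, 1)) ∧ StrictMono fun k => f (k, 0)

lemma existsUnique_strictMono_comp_perm {α : Type*} [LinearOrder α] {n : ℕ} {f : Fin n → α}
    (hf : Function.Injective f) : ∃! σ : Perm (Fin n), StrictMono (f ∘ σ) :=
  ⟨Tuple.sort f, (Tuple.monotone_sort f).strictMono_of_injective (hf.comp (Equiv.injective _)),
    fun _ hσ => coe_fn_injective <| hf.comp_left <|
      Tuple.unique_monotone hσ.monotone (Tuple.monotone_sort f)⟩

lemma existsUnique_isNormalized_comp_blockPerm {α : Type*} [LinearOrder α] {n : ℕ}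
    {f : Fin n × Fin 2 → α} (hf : Function.Injective f) :
    ∃! h, IsNormalized (f ∘ blockPerm h) := by
  have hpair (k : Fin n) : ∃! p : Perm (Fin 2), f (k, p 0) < f (k, p 1) := by
    simpa [Fin.strictMono_iff_lt_succ] using
      existsUnique_strictMono_comp_perm (hf.comp (Prod.mk_right_injective k))
  choose p hp hp_unique using hpair
  obtain ⟨s, hs, hs_unique⟩ := existsUnique_strictMono_comp_perm
    (f := fun k => f (k, p k 0)) fun k l hkl => congr_arg Prod.fst (hf hkl)
  refine ⟨(p ∘ s, s), ⟨fun k => hp (s k), hs⟩, ?_⟩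
  rintro ⟨q, t⟩ ⟨hq, ht⟩
  have hqp (k : Fin n) : q k = p (t k) := hp_unique (t k) (q k) (hq k)
  obtain rfl : t = s := hs_unique t (by simpa [hqp, Function.comp_def] using ht)
  exact Prod.ext (funext hqp) rfl

end Normalization

section PfaffianSum

/-- The product of the entries of `A` at the index pairs `(f (k, 0), f (k, 1))`, that is, the weight
in `A` of the matching given by `f`. -/
def pairProd {ι κ : Type*} [Fintype κ] (A : Matrix ι ι R) (f : κ × Fin 2 → ι) : R :=
  ∏ k, A (f (k, 0)) (f (k, 1))

lemma pairProd_comp_blockPerm {ι κ : Type*} [Fintype κ] [DecidableEq κ] {A : Matrix ι ι R}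
    (hA : Aᵀ = -A) (f : κ × Fin 2 → ι) (h : (κ → Perm (Fin 2)) × Perm κ) :
    pairProd A (f ∘ blockPerm h) = sign (blockPerm h) • pairProd A f := by
  have hswap (x y : ι) : A y x = -A x y := congr_fun₂ hA x y
  have hflip (k : κ) (p : Perm (Fin 2)) :
      A (f (k, p 0)) (f (k, p 1)) = sign p • A (f (k, 0)) (f (k, 1)) := by
    obtain rfl | rfl : p = 1 ∨ p = swap 0 1 := by revert p; decide
    · simp
    · simp [hswap (f (k, 0))]
  simp only [pairProd, Function.comp_apply, blockPerm_apply, hflip, Finset.prod_smul,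
    sign_blockPerm]
  rw [Equiv.prod_comp h.2 fun k => A (f (k, 0)) (f (k, 1))]

lemma pairProd_mul_mul_transpose {ι κ μ : Type*} [Fintype ι] [Fintype κ] [DecidableEq κ]
    (A : Matrix ι ι R) (B : Matrix μ ι R) (g : κ × Fin 2 → μ) :
    pairProd (B * A * Bᵀ) g = ∑ f : κ × Fin 2 → ι, pairProd A f * ∏ x, B (g x) (f x) := by
  have hentry (x y : μ) : (B * A * Bᵀ) x y =
      ∑ p : Fin 2 → ι, A (p 0) (p 1) * (B x (p 0) * B y (p 1)) := by
    rw [← (finTwoArrowEquiv ι).symm.sum_comp, Fintype.sum_prod_type_right]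
    simp only [Matrix.mul_apply, transpose_apply, Finset.sum_mul]
    refine Finset.sum_congr rfl fun _ _ => Finset.sum_congr rfl fun _ _ => ?_
    simp only [finTwoArrowEquiv_symm_apply, cons_val_zero, cons_val_one]
    ring
  simp only [pairProd, hentry, Fintype.prod_sum, Fintype.prod_prod_type, Fin.prod_univ_two,
    Finset.prod_mul_distrib]
  exact Fintype.sum_equiv (Equiv.curry κ (Fin 2) ι).symm _ _ fun _ => by simp

/-- The unnormalized Pfaffian of `A`: the signed sum of the matching weights over all permutations,
so that each perfect matching is counted once for every ordering of its edges and of their ends.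
The equivalence `e` arranges the indices in pairs. -/
def pfaffianSum {ι κ : Type*} [Fintype ι] [DecidableEq ι] [Fintype κ] (e : κ × Fin 2 ≃ ι)
    (A : Matrix ι ι R) : R :=
  ∑ σ : Perm ι, sign σ • pairProd A (σ ∘ e)

variable {ι κ : Type*} [Fintype ι] [DecidableEq ι] [Fintype κ]

lemma pfaffianSum_mul_mul_transpose (e : κ × Fin 2 ≃ ι) (A B : Matrix ι ι R) :
    pfaffianSum e (B * A * Bᵀ) = B.det * pfaffianSum e A := by
  classical
  calc pfaffianSum e (B * A * Bᵀ)
    _ = ∑ σ : Perm ι, sign σ • ∑ f : ι → ι, pairProd A (f ∘ e) * ∏ j, B (σ j) (f j) := by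
      simp only [pfaffianSum, pairProd_mul_mul_transpose]
      refine Finset.sum_congr rfl fun σ _ => congr_arg _ ?_
      rw [← (e.symm.arrowCongr (Equiv.refl ι)).sum_comp]
      simp only [← e.prod_comp]
      rfl
    _ = ∑ f : ι → ι, pairProd A (f ∘ e) * (B.submatrix id f).det := by
      simp only [Finset.smul_sum, det_apply, Finset.mul_sum, mul_smul_comm]
      exact Finset.sum_comm
    _ = B.det * pfaffianSum e A := sum_mul_det_submatrix B fun f => pairProd A (f ∘ e)

end PfaffianSum

section Pfaffian

/-- The arrangement of `Fin (2 * n)` in consecutive pairs, sending `(i, b)` to `2 * i + b`. -/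
def pairEquiv (n : ℕ) : Fin n × Fin 2 ≃ Fin (2 * n) :=
  finProdFinEquiv.trans (finCongr (mul_comm n 2))

lemma pairEquiv_zero {n : ℕ} (i : Fin n) : pairEquiv n (i, 0) = ⟨2 * i, by omega⟩ := by
  ext; simp [pairEquiv]

lemma pairEquiv_one {n : ℕ} (i : Fin n) : pairEquiv n (i, 1) = ⟨2 * i + 1, by omega⟩ := by
  ext; simp [pairEquiv, add_comm]

variable {n : ℕ}

lemma mem_pfPerms {σ : Perm (Fin (2 * n))} :
    σ ∈ pfPerms n ↔ IsNormalized (σ ∘ pairEquiv n) := by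
  simp only [pfPerms, IsNormalized, StrictMono, Finset.mem_filter_univ, Function.comp_apply,
    pairEquiv_zero, pairEquiv_one]

lemma one_mem_pfPerms : 1 ∈ pfPerms n := by
  simp [mem_pfPerms, IsNormalized, StrictMono, pairEquiv_zero, pairEquiv_one]

lemma existsUnique_mul_blockPerm_mem_pfPerms (σ : Perm (Fin (2 * n))) :
    ∃! h, σ * (pairEquiv n).permCongr (blockPerm h) ∈ pfPerms n := by
  convert existsUnique_isNormalized_comp_blockPerm (σ.injective.comp (pairEquiv n).injective)
    using 2 with h
  rw [mem_pfPerms]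
  congr! 1
  ext x
  simp

lemma eq_one_of_mem_pfPerms {σ : Perm (Fin (2 * n))} (hσ : σ ∈ pfPerms n)
    (hpairs : ∀ k, ((pairEquiv n).symm (σ (pairEquiv n (k, 0)))).1 =
      ((pairEquiv n).symm (σ (pairEquiv n (k, 1)))).1) : σ = 1 := by
  let e := pairEquiv n
  obtain ⟨h, hh⟩ := exists_eq_blockPerm_of_fst_apply_eq (σ := e.symm.permCongr σ) (by
    simpa [Fin.forall_fin_two] using fun k => ⟨hpairs k, (hpairs k).symm⟩)
  obtain rfl : e.permCongr (blockPerm h) = σ := by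
    rw [← hh]
    ext
    simp
  have hone : e.permCongr (blockPerm 1) = 1 := e.permCongr_refl
  have h_eq_one : h = 1 := (existsUnique_mul_blockPerm_mem_pfPerms 1).unique
    (by simpa using hσ) (by rw [one_mul, hone]; exact one_mem_pfPerms)
  rw [h_eq_one, hone]

lemma pfaffian_eq_sum_pairProd (A : Matrix (Fin (2 * n)) (Fin (2 * n)) R) :
    pfaffian A = ∑ σ ∈ pfPerms n, sign σ • pairProd A (σ ∘ pairEquiv n) := by
  simp only [pfaffian, pairProd, Units.smul_def, Function.comp_apply, pairEquiv_zero,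
    pairEquiv_one]

lemma pfaffianSum_eq_card_nsmul_pfaffian {A : Matrix (Fin (2 * n)) (Fin (2 * n)) R}
    (hA : Aᵀ = -A) : pfaffianSum (pairEquiv n) A =
      Fintype.card ((Fin n → Perm (Fin 2)) × Perm (Fin n)) • pfaffian A := by
  rw [pfaffianSum, pfaffian_eq_sum_pairProd]
  refine sum_eq_card_nsmul_sum_of_existsUnique existsUnique_mul_blockPerm_mem_pfPerms
    fun σ h => ?_
  have hcomp : ⇑(σ * (pairEquiv n).permCongr (blockPerm h)) ∘ pairEquiv n =
      (σ ∘ pairEquiv n) ∘ blockPerm h := by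
    ext x
    simp
  rw [hcomp, pairProd_comp_blockPerm hA, Perm.sign_mul, sign_permCongr, smul_smul, mul_assoc,
    Int.units_mul_self, mul_one]

theorem pfaffian_mul_mul_transpose [IsAddTorsionFree R]
    {A : Matrix (Fin (2 * n)) (Fin (2 * n)) R} (hA : Aᵀ = -A)
    (B : Matrix (Fin (2 * n)) (Fin (2 * n)) R) :
    pfaffian (B * A * Bᵀ) = B.det * pfaffian A := by
  have hBA : (B * A * Bᵀ)ᵀ = -(B * A * Bᵀ) := by
    simp [hA, Matrix.mul_assoc]
  have h := pfaffianSum_mul_mul_transpose (pairEquiv n) A B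
  rw [pfaffianSum_eq_card_nsmul_pfaffian hBA, pfaffianSum_eq_card_nsmul_pfaffian hA,
    mul_smul_comm] at h
  exact nsmul_right_injective Fintype.card_ne_zero h

lemma pfaffian_map {S : Type*} [CommRing S] (f : R →+* S)
    (A : Matrix (Fin (2 * n)) (Fin (2 * n)) R) : pfaffian (A.map f) = f (pfaffian A) := by
  simp [pfaffian]

end Pfaffian

section StandardAlternating

/-- The standard alternating matrix: block diagonal with blocks `!![0, 1; -1, 0]`, one for each of
the pairs into which `e` arranges the indices. -/
def standardAlternating (R : Type*) [CommRing R] {ι κ : Type*} [DecidableEq κ]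
    (e : κ × Fin 2 ≃ ι) : Matrix ι ι R :=
  reindex e e ((1 : Matrix κ κ R) ⊗ₖ !![0, 1; -1, 0])

variable {ι κ : Type*} [DecidableEq κ] (e : κ × Fin 2 ≃ ι)

lemma standardAlternating_apply (x y : κ × Fin 2) :
    standardAlternating R e (e x) (e y) =
      (1 : Matrix κ κ R) x.1 y.1 * (!![0, 1; -1, 0] : Matrix (Fin 2) (Fin 2) R) x.2 y.2 := by
  simp [standardAlternating, kroneckerMap_apply]

lemma standardAlternating_transpose :
    (standardAlternating R e)ᵀ = -standardAlternating R e := by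
  have hblock : (!![0, 1; -1, 0] : Matrix (Fin 2) (Fin 2) R)ᵀ = -!![0, 1; -1, 0] := by
    ext i j
    fin_cases i <;> fin_cases j <;> simp
  ext i j
  obtain ⟨x, rfl⟩ := e.surjective i
  obtain ⟨y, rfl⟩ := e.surjective j
  have h := congr_fun₂ hblock x.2 y.2
  rw [transpose_apply, Matrix.neg_apply] at h
  rw [transpose_apply, Matrix.neg_apply, standardAlternating_apply, standardAlternating_apply, h,
    mul_neg, ← transpose_apply 1, transpose_one]

lemma det_standardAlternating [Fintype ι] [DecidableEq ι] :
    (standardAlternating R e).det = 1 := by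
  have : Finite κ := .of_injective (fun k => e (k, 0)) fun k l hkl => by simpa using hkl
  have := Fintype.ofFinite κ
  rw [standardAlternating, det_reindex_self, det_kronecker]
  simp

lemma pfaffian_standardAlternating (n : ℕ) :
    pfaffian (standardAlternating R (pairEquiv n)) = 1 := by
  have hzero (σ : Perm (Fin (2 * n))) (hσ : σ ∈ pfPerms n) (hne : σ ≠ 1) :
      pairProd (standardAlternating R (pairEquiv n)) (σ ∘ pairEquiv n) = 0 := by
    obtain ⟨k, hk⟩ := not_forall.1 (mt (eq_one_of_mem_pfPerms hσ) hne)
    refine Finset.prod_eq_zero (Finset.mem_univ k) ?_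
    simp [standardAlternating, kroneckerMap_apply, Matrix.one_apply_ne hk]
  rw [pfaffian_eq_sum_pairProd, Finset.sum_eq_single_of_mem 1 one_mem_pfPerms fun σ hσ hne => by
    rw [hzero σ hσ hne, smul_zero]]
  simp [pairProd, standardAlternating_apply]

end StandardAlternating

section IsAlternating

/-- A square matrix is alternating if it is skew-symmetric with zero diagonal; the second condition
is not automatic when `2` is a zero divisor. -/
structure IsAlternating {ι α : Type*} [AddGroup α] (A : Matrix ι ι α) : Prop where
  transpose_eq_neg : Aᵀ = -A
  diag_eq_zero (i : ι) : A i i = 0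

/-- The matrix of the alternating form `u ∧ v`. -/
def wedge {ι : Type*} (u v : ι → R) : Matrix ι ι R :=
  vecMulVec u v - vecMulVec v u

variable {ι α : Type*}

lemma wedge_apply (u v : ι → R) (i j : ι) : wedge u v i j = u i * v j - v i * u j := rfl

lemma isAlternating_sub_transpose [AddGroup α] (M : Matrix ι ι α) : IsAlternating (M - Mᵀ) :=
  ⟨by simp, fun i => sub_self _⟩

lemma isAlternating_wedge (u v : ι → R) : IsAlternating (wedge u v) := by
  simpa [wedge] using isAlternating_sub_transpose (vecMulVec u v)

namespace IsAlternating

lemma apply_swap [AddGroup α] {A : Matrix ι ι α} (hA : IsAlternating A) (i j : ι) :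
    A j i = -A i j :=
  congr_fun₂ hA.transpose_eq_neg i j

lemma sub [AddCommGroup α] {A A' : Matrix ι ι α} (hA : IsAlternating A)
    (hA' : IsAlternating A') : IsAlternating (A - A') :=
  ⟨by rw [transpose_sub, hA.transpose_eq_neg, hA'.transpose_eq_neg, neg_sub_neg, neg_sub],
    fun i => by simp [hA.diag_eq_zero, hA'.diag_eq_zero]⟩

lemma map {β F : Type*} [AddGroup α] [AddGroup β] [FunLike F α β] [AddMonoidHomClass F α β]
    {A : Matrix ι ι α} (hA : IsAlternating A) (f : F) : IsAlternating (A.map f) :=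
  ⟨by ext i j; simp [hA.apply_swap i j], fun i => by simp [hA.diag_eq_zero]⟩

lemma exists_eq_sub_transpose [AddGroup α] {A : Matrix ι ι α} (hA : IsAlternating A) :
    ∃ M : Matrix ι ι α, A = M - Mᵀ := by
  classical
  let : LinearOrder ι := linearOrderOfSTO WellOrderingRel
  refine ⟨of fun i j => if i < j then A i j else 0, ?_⟩
  ext i j
  rcases lt_trichotomy i j with h | rfl | h
  · simp [h, h.not_gt]
  · simp [hA.diag_eq_zero]
  · simp [h, h.not_gt, hA.apply_swap j i]

section Field

variable {K : Type*} [Field K] {A : Matrix ι ι K}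

/- Gaussian elimination with the pivot `A a b`: the wedge has the same rows `a` and `b` as `A`. -/
lemma sub_wedge_row_eq_zero (hA : IsAlternating A) {a b x : ι} (hab : A a b ≠ 0)
    (hx : x = a ∨ x = b ∨ A x = 0) : (A - wedge (A a) ((A a b)⁻¹ • A b)) x = 0 := by
  ext y
  simp only [Matrix.sub_apply, wedge_apply, Pi.smul_apply, smul_eq_mul, Pi.zero_apply]
  rcases hx with rfl | rfl | hx
  · rw [hA.diag_eq_zero, hA.apply_swap x b]
    field_simp
    ring
  · rw [hA.diag_eq_zero]
    field_simp
    ring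
  · simp [hA.apply_swap x, hx]

lemma exists_eq_sum_wedge (hA : IsAlternating A) {k : ℕ} {s : Finset ι}
    (hs : ∀ x ∉ s, A x = 0) (hcard : s.card ≤ 2 * k) :
    ∃ u v : Fin k → ι → K, A = ∑ i, wedge (u i) (v i) := by
  classical
  induction k generalizing A s with
  | zero =>
    obtain rfl : s = ∅ := by simpa using hcard
    exact ⟨0, 0, by ext x; simp [hs]⟩
  | succ k ih =>
    rcases eq_or_ne A 0 with rfl | hne
    · exact ⟨0, 0, by simp [wedge]⟩
    obtain ⟨a, b, hab⟩ : ∃ a b, A a b ≠ 0 := by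
      by_contra! h
      exact hne (Matrix.ext h)
    have ha : a ∈ s := by_contra fun ha => hab (congr_fun (hs a ha) b)
    have hb : b ∈ s := by_contra fun hb => hab (by simp [hA.apply_swap b a, hs b hb])
    have hba : b ≠ a := by rintro rfl; exact hab (hA.diag_eq_zero b)
    obtain ⟨u, v, huv⟩ := ih (s := (s.erase a).erase b)
      (hA.sub (isAlternating_wedge (A a) ((A a b)⁻¹ • A b)))
      (fun x hx => hA.sub_wedge_row_eq_zero hab <| by
        by_contra! hx'
        exact hx (by simp [hx'.1, hx'.2.1, not_imp_comm.1 (hs x) hx'.2.2]))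
      (by
        rw [Finset.card_erase_of_mem (Finset.mem_erase.2 ⟨hba, hb⟩), Finset.card_erase_of_mem ha]
        omega)
    refine ⟨Fin.cons (A a) u, Fin.cons ((A a b)⁻¹ • A b) v, ?_⟩
    simp [Fin.sum_univ_succ, ← huv]

end Field

end IsAlternating

lemma exists_sum_wedge_eq_mul_standardAlternating_mul_transpose {κ : Type*} [Fintype ι]
    [Fintype κ] [DecidableEq κ] (e : κ × Fin 2 ≃ ι) (u v : κ → ι → R) :
    ∃ B, ∑ k, wedge (u k) (v k) = B * standardAlternating R e * Bᵀ := by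
  refine ⟨of fun x i => ![u (e.symm i).1 x, v (e.symm i).1 x] (e.symm i).2, ?_⟩
  ext x y
  simp only [Matrix.mul_apply, Matrix.sum_apply, transpose_apply, ← e.sum_comp,
    Fintype.sum_prod_type, Fin.sum_univ_two, standardAlternating_apply, of_apply,
    Equiv.symm_apply_apply]
  refine Finset.sum_congr rfl fun k _ => ?_
  simp only [wedge_apply, Matrix.one_apply, cons_val', cons_val_zero, cons_val_one,
    cons_val_fin_one, mul_ite, ite_mul, zero_mul, mul_zero, Finset.sum_add_distrib,
    Finset.sum_ite_eq', Finset.sum_const_zero, Finset.mem_univ, if_true]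
  ring

lemma IsAlternating.exists_eq_mul_standardAlternating_mul_transpose {K : Type*} [Field K]
    [Fintype ι] {n : ℕ} {A : Matrix ι ι K} (hA : IsAlternating A) (e : Fin n × Fin 2 ≃ ι) :
    ∃ B, A = B * standardAlternating K e * Bᵀ := by
  have hcard : Fintype.card ι = 2 * n := by simp [← Fintype.card_congr e, mul_comm]
  obtain ⟨u, v, rfl⟩ := hA.exists_eq_sum_wedge (s := Finset.univ) (by simp) hcard.le
  exact exists_sum_wedge_eq_mul_standardAlternating_mul_transpose e u v

end IsAlternating

section DetEqPfaffianSq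

variable {n : ℕ}

lemma IsAlternating.det_eq_pfaffian_sq_of_field {K : Type*} [Field K] [CharZero K]
    {A : Matrix (Fin (2 * n)) (Fin (2 * n)) K} (hA : IsAlternating A) :
    A.det = pfaffian A ^ 2 := by
  obtain ⟨B, rfl⟩ := hA.exists_eq_mul_standardAlternating_mul_transpose (pairEquiv n)
  rw [pfaffian_mul_mul_transpose (standardAlternating_transpose _), pfaffian_standardAlternating,
    det_mul, det_mul, det_transpose, det_standardAlternating]
  ring

lemma IsAlternating.det_eq_pfaffian_sq_of_isDomain [IsDomain R] [CharZero R]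
    {A : Matrix (Fin (2 * n)) (Fin (2 * n)) R} (hA : IsAlternating A) :
    A.det = pfaffian A ^ 2 := by
  let f : R →+* FractionRing R := algebraMap R (FractionRing R)
  have hf : Function.Injective f := IsFractionRing.injective R (FractionRing R)
  have : CharZero (FractionRing R) := charZero_of_injective_algebraMap hf
  apply hf
  rw [map_pow, ← pfaffian_map, RingHom.map_det]
  exact (hA.map f).det_eq_pfaffian_sq_of_field

theorem det_sub_transpose_eq_pfaffian_sq (M : Matrix (Fin (2 * n)) (Fin (2 * n)) R) :
    (M - Mᵀ).det = pfaffian (M - Mᵀ) ^ 2 := by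
  let X := mvPolynomialX (Fin (2 * n)) (Fin (2 * n)) ℤ
  let f := MvPolynomial.eval₂Hom (Int.castRingHom R) fun p : Fin (2 * n) × Fin (2 * n) =>
    M p.1 p.2
  have hX : X.map f = M := mvPolynomialX_map_eval₂ (Int.castRingHom R) M
  have hf : (X - Xᵀ).map f = M - Mᵀ := by
    rw [Matrix.map_sub f (map_sub f), transpose_map, hX]
  rw [← hf, pfaffian_map, ← map_pow,
    ← (isAlternating_sub_transpose X).det_eq_pfaffian_sq_of_isDomain, RingHom.map_det]
  rfl

end DetEqPfaffianSq

/-- The determinant of an alternating matrix of even size `2n` equals the square of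
its Pfaffian. -/
theorem det_alternating_eq_pfaffian_sq
    {R : Type*} [CommRing R] {n : ℕ} (φ : Matrix (Fin (2*n)) (Fin (2*n)) R)
    (halt : φ.transpose = -φ) (hdiag : ∀ i, φ i i = 0) :
    φ.det = pfaffian φ ^ 2 := by
  obtain ⟨M, rfl⟩ := IsAlternating.exists_eq_sub_transpose ⟨halt, hdiag⟩
  exact det_sub_transpose_eq_pfaffian_sq M
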